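/- arXiv:2110.07265 — 7 statements merged into one kernel-verified Lean document; each statement's English description precedes it below -/
import Mathlib

section
/- Let d ≥ 1 and K ≥ 1 be integers, let Λ_1, …, Λ_K be symmetric positive definite d×d real matrices, set Λ_𝒞 := (∑_{c=1}^K Λ_c^{−1})^{−1}, and let 0 ≤ s < t < T be reals. Define the Kd×Kd block matrices V and W by blocks (for i, j ∈ {1,…,K}): V_{ii} = ((t−s)(T−t)/(T−s)) Λ_i + ((t−s)²/(T−s)) Λ_𝒞, V_{ij} = ((t−s)²/(T−s)) Λ_𝒞 for i ≠ j, W_{ii} = ((T−s)/((t−s)(T−t))) Λ_i^{−1} − (1/(T−t)) Λ_i^{−1} Λ_𝒞 Λ_i^{−1}, and W_{ij} = −(1/(T−t)) Λ_i^{−1} Λ_𝒞 Λ_j^{−1} for i ≠ j. Then V·W = I (the Kd×Kd identity), i.e. V is invertible with V^{−1} = W. Moreover, for any x_1, …, x_K ∈ ℝ^d, writing x̃ := Λ_𝒞 ∑_{c=1}^K Λ_c^{−1} x_c, the c-th d-dimensional block of (1/(t−s)) · V · (Λ_1^{−1} x_1, …, Λ_K^{−1} x_K) equals ((T−t)/(T−s))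 x_c + ((t−s)/(T−s)) x̃. -/
open Matrix

/-- Proposition 2(a) of the paper: the block matrix `W` is the inverse of the
GBF proposal covariance block matrix `V`, and `(1/(t-s)) • V` applied to the stacked vector of
precision-weighted states gives the conditional means `((T-t)/(T-s)) x_c + ((t-s)/(T-s)) x̃`. -/
theorem statement2 (d K : ℕ) (hd : 1 ≤ d) (hK : 1 ≤ K)
    (Λ : Fin K → Matrix (Fin d) (Fin d) ℝ) (hΛ : ∀ c, (Λ c).PosDef)
    (s t T : ℝ) (hs : 0 ≤ s) (hst : s < t) (htT : t < T) :
    let ΛC : Matrix (Fin d) (Fin d) ℝ := (∑ c, (Λ c)⁻¹)⁻¹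
    let V : Matrix (Fin K × Fin d) (Fin K × Fin d) ℝ :=
      Matrix.of fun pq rs =>
        (if pq.1 = rs.1 then
            (((t - s) * (T - t) / (T - s)) • Λ pq.1 + ((t - s) ^ 2 / (T - s)) • ΛC)
          else ((t - s) ^ 2 / (T - s)) • ΛC) pq.2 rs.2
    let W : Matrix (Fin K × Fin d) (Fin K × Fin d) ℝ :=
      Matrix.of fun pq rs =>
        (if pq.1 = rs.1 then
            (((T - s) / ((t - s) * (T - t))) • (Λ pq.1)⁻¹ -
              (1 / (T - t)) • ((Λ pq.1)⁻¹ * ΛC * (Λ rs.1)⁻¹))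
          else -((1 / (T - t)) • ((Λ pq.1)⁻¹ * ΛC * (Λ rs.1)⁻¹))) pq.2 rs.2
    V * W = 1 ∧
      ∀ x : Fin K → Fin d → ℝ,
        let xt : Fin d → ℝ := ΛC.mulVec (∑ c, (Λ c)⁻¹.mulVec (x c))
        ∀ (c : Fin K) (a : Fin d),
          ((1 / (t - s)) • V).mulVec (fun pq => (Λ pq.1)⁻¹.mulVec (x pq.1) pq.2) (c, a) =
            ((T - t) / (T - s)) * x c a + ((t - s) / (T - s)) * xt a := by
  intro C V W
  have hu : ∀ c, IsUnit (Λ c).det := fun c => (Matrix.isUnit_iff_isUnit_det _).1 (hΛ c).isUnit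
  have hne : (Finset.univ : Finset (Fin K)).Nonempty := ⟨⟨0, hK⟩, Finset.mem_univ _⟩
  have hS : (∑ c, (Λ c)⁻¹).PosDef := Matrix.posDef_sum hne fun c _ => (hΛ c).inv
  have hSu : IsUnit (∑ c, (Λ c)⁻¹).det := (Matrix.isUnit_iff_isUnit_det _).1 hS.isUnit
  have hCS : C * (∑ c, (Λ c)⁻¹) = 1 := Matrix.nonsing_inv_mul _ hSu
  have h1 : t - s ≠ 0 := by linarith
  have h2 : T - t ≠ 0 := by linarith
  have h3 : T - s ≠ 0 := by linarith
  let Vb : Fin K → Fin K → Matrix (Fin d) (Fin d) ℝ := fun i j =>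
    (if i = j then ((t - s) * (T - t) / (T - s)) • Λ i else 0) + ((t - s) ^ 2 / (T - s)) • C
  let Wb : Fin K → Fin K → Matrix (Fin d) (Fin d) ℝ := fun i j =>
    (if i = j then ((T - s) / ((t - s) * (T - t))) • (Λ i)⁻¹ else 0)
      - (1 / (T - t)) • ((Λ i)⁻¹ * (C * (Λ j)⁻¹))
  have hV : ∀ i a j b, V (i, a) (j, b) = Vb i j a b := by
    intro i a j b
    by_cases h : i = j <;> simp [V, Vb, h]
  have hW : ∀ i a j b, W (i, a) (j, b) = Wb i j a b := by
    intro i a j b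
    by_cases h : i = j <;> simp [W, Wb, h, Matrix.mul_assoc]
  constructor
  · ext ⟨i, a⟩ ⟨j, b⟩
    have key : ∑ k, Vb i k * Wb k j = if i = j then 1 else 0 := by
      have e : ∀ k, Vb i k * Wb k j =
          (if i = k then ((t - s) * (T - t) / (T - s)) • (Λ i * Wb i j) else 0)
          + ((if k = j then (((t - s) ^ 2 / (T - s)) * ((T - s) / ((t - s) * (T - t)))) •
              (C * (Λ j)⁻¹) else 0)
          - (((t - s) ^ 2 / (T - s)) * (1 / (T - t))) • (C * (Λ k)⁻¹ * (C * (Λ j)⁻¹))) := by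
        intro k
        have e1 : (((t - s) ^ 2 / (T - s)) • C) * Wb k j =
          ((if k = j then (((t - s) ^ 2 / (T - s)) * ((T - s) / ((t - s) * (T - t)))) •
              (C * (Λ j)⁻¹) else 0)
          - (((t - s) ^ 2 / (T - s)) * (1 / (T - t))) • (C * (Λ k)⁻¹ * (C * (Λ j)⁻¹))) := by
          simp only [Wb, Matrix.mul_sub]
          congr 1
          · split_ifs with h
            · subst h
              rw [Matrix.smul_mul, Matrix.mul_smul, smul_smul]
            · simp
          · rw [Matrix.smul_mul, Matrix.mul_smul, smul_smul, Matrix.mul_assoc]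
        rw [← e1]
        simp only [Vb, Matrix.add_mul]
        congr 1
        split_ifs with h
        · subst h
          rw [Matrix.smul_mul]
        · simp
      have e2 : Λ i * Wb i j = (if i = j then ((T - s) / ((t - s) * (T - t))) • 1 else 0)
          - (1 / (T - t)) • (C * (Λ j)⁻¹) := by
        simp only [Wb, Matrix.mul_sub]
        congr 1
        · split_ifs with h
          · rw [Matrix.mul_smul, Matrix.mul_nonsing_inv _ (hu i)]
          · simp
        · rw [Matrix.mul_smul, ← Matrix.mul_assoc, Matrix.mul_nonsing_inv _ (hu i), Matrix.one_mul]
      simp only [e, Finset.sum_add_distrib, Finset.sum_sub_distrib, Finset.sum_ite_eq,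
        Finset.sum_ite_eq', Finset.mem_univ, if_true]
      rw [← Finset.smul_sum, ← Finset.sum_mul, ← Finset.mul_sum, hCS, Matrix.one_mul, e2, smul_sub,
        smul_smul]
      have e3 : ((t - s) * (T - t) / (T - s)) • (if i = j then
          ((T - s) / ((t - s) * (T - t))) • (1 : Matrix (Fin d) (Fin d) ℝ) else 0)
          = if i = j then 1 else 0 := by
        split_ifs
        · rw [smul_smul]
          have : ((t - s) * (T - t) / (T - s)) * ((T - s) / ((t - s) * (T - t))) = 1 := by
            field_simp
          rw [this, one_smul]
        · simp
      rw [e3, sub_add, ← sub_smul, ← sub_smul]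
      have e4 : (t - s) * (T - t) / (T - s) * (1 / (T - t)) -
          ((t - s) ^ 2 / (T - s) * ((T - s) / ((t - s) * (T - t))) -
          (t - s) ^ 2 / (T - s) * (1 / (T - t))) = 0 := by
        field_simp
        ring
      rw [e4, zero_smul, sub_zero]
    have k2 := congrFun (congrFun key a) b
    rw [Matrix.sum_apply] at k2
    rw [Matrix.mul_apply, Fintype.sum_prod_type]
    simp only [hV, hW]
    simp only [Matrix.mul_apply] at k2
    rw [k2]
    by_cases h : i = j <;> simp [h, Matrix.one_apply]
  · intro x xt c a
    have key : ∑ k, Vb c k *ᵥ ((Λ k)⁻¹ *ᵥ x k) =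
        ((t - s) * (T - t) / (T - s)) • x c + ((t - s) ^ 2 / (T - s)) • xt := by
      have e : ∀ k, Vb c k *ᵥ ((Λ k)⁻¹ *ᵥ x k) =
          (if c = k then ((t - s) * (T - t) / (T - s)) • x c else 0)
          + ((t - s) ^ 2 / (T - s)) • (C *ᵥ ((Λ k)⁻¹ *ᵥ x k)) := by
        intro k
        simp only [Vb, Matrix.add_mulVec, Matrix.smul_mulVec]
        congr 1
        split_ifs with h
        · subst h
          rw [Matrix.smul_mulVec, Matrix.mulVec_mulVec, Matrix.mul_nonsing_inv _ (hu c),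
            Matrix.one_mulVec]
        · simp
      simp only [e, Finset.sum_add_distrib, Finset.sum_ite_eq, Finset.mem_univ, if_true]
      rw [← Finset.smul_sum, ← Matrix.mulVec_sum]
    have k2 := congrFun key a
    rw [Finset.sum_apply] at k2
    simp only [Matrix.mulVec, dotProduct, Pi.add_apply, Pi.smul_apply, smul_eq_mul] at k2
    rw [Matrix.smul_mulVec, Pi.smul_apply, Matrix.mulVec, dotProduct, Fintype.sum_prod_type]
    simp only [hV, Matrix.mulVec, dotProduct, smul_eq_mul]
    rw [k2]
    field_simp
end

section
/- Let d ≥ 1, let f : ℝ^d → (0, ∞) be twice continuously differentiable, let Λ be a symmetric positive definite d×d real matrix with positive definite square root Λ^{1/2}, and define φ(x) := ½( ∇log f(x)ᵀ Λ ∇log f(x) + Tr(Λ ∇²log f(x)) ). Let R ⊆ ℝ^d be a convex set, let x̂ ∈ R, and let D, P ≥ 0 be constants such that ‖Λ^{−1/2}(x − x̂)‖ ≤ D for all x ∈ R and ‖Λ ∇²log f(x)‖_op ≤ P for all x ∈ R, where ‖·‖_op is the operator norm induced by the Euclidean norm. Then for all x ∈ R: −½ d P ≤ φ(x) ≤ ½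 [ ( ‖Λ^{1/2} ∇log f(x̂)‖ + D·P )² + d P ]. -/
open Matrix

/-- The Euclidean norm on `Fin d → ℝ`. -/
noncomputable def euclNorm {d : ℕ} (v : Fin d → ℝ) : ℝ := Real.sqrt (∑ i, v i ^ 2)

/-- The gradient of `log f`, expressed coordinatewise via the Fréchet derivative. -/
noncomputable def gradLog {d : ℕ} (f : (Fin d → ℝ) → ℝ) (x : Fin d → ℝ) : Fin d → ℝ :=
  fun i => fderiv ℝ (fun y => Real.log (f y)) x (Pi.single i 1)

/-- The Hessian matrix of `log f`. -/
noncomputable def hessLog {d : ℕ} (f : (Fin d → ℝ) → ℝ) (x : Fin d → ℝ) :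
    Matrix (Fin d) (Fin d) ℝ :=
  Matrix.of fun i j =>
    fderiv ℝ (fun y => fderiv ℝ (fun z => Real.log (f z)) y (Pi.single j 1)) x (Pi.single i 1)

/-- `φ(x) = ½( ∇log f(x)ᵀ Λ ∇log f(x) + Tr(Λ ∇²log f(x)) )`. -/
noncomputable def phiFn {d : ℕ} (f : (Fin d → ℝ) → ℝ) (Λ : Matrix (Fin d) (Fin d) ℝ)
    (x : Fin d → ℝ) : ℝ :=
  (gradLog f x ⬝ᵥ Λ.mulVec (gradLog f x) + (Λ * hessLog f x).trace) / 2

lemma euclNorm_eq {d : ℕ} (v : Fin d → ℝ) : euclNorm v = ‖WithLp.toLp 2 v‖ := by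
  rw [EuclideanSpace.norm_eq, euclNorm]
  simp

lemma euclNorm_nonneg {d : ℕ} (v : Fin d → ℝ) : 0 ≤ euclNorm v := Real.sqrt_nonneg _

lemma euclNorm_sq {d : ℕ} (v : Fin d → ℝ) : euclNorm v ^ 2 = v ⬝ᵥ v := by
  rw [euclNorm, Real.sq_sqrt (Finset.sum_nonneg fun i _ => sq_nonneg _)]
  simp [dotProduct, pow_two]

lemma euclNorm_smul {d : ℕ} (c : ℝ) (v : Fin d → ℝ) : euclNorm (c • v) = |c| * euclNorm v := by
  rw [euclNorm_eq, euclNorm_eq, WithLp.toLp_smul, norm_smul, Real.norm_eq_abs]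

lemma dot_le {d : ℕ} (v w : Fin d → ℝ) : v ⬝ᵥ w ≤ euclNorm v * euclNorm w := by
  rw [euclNorm, euclNorm]
  exact Real.sum_mul_le_sqrt_mul_sqrt _ _ _

lemma abs_apply_le {d : ℕ} (v : Fin d → ℝ) (i : Fin d) : |v i| ≤ euclNorm v := by
  rw [euclNorm]
  apply Real.abs_le_sqrt
  exact Finset.single_le_sum (f := fun i => v i ^ 2) (fun i _ => sq_nonneg _) (Finset.mem_univ i)

lemma euclNorm_single {d : ℕ} (i : Fin d) : euclNorm (Pi.single i (1 : ℝ)) = 1 := by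
  rw [euclNorm, Real.sqrt_eq_one, Finset.sum_eq_single i]
  · simp
  · intro j _ hj
    simp [hj]
  · simp

lemma abs_trace_le {d : ℕ} (A : Matrix (Fin d) (Fin d) ℝ) (P : ℝ)
    (h : ∀ v, euclNorm (A.mulVec v) ≤ P * euclNorm v) : |A.trace| ≤ d * P := by
  have h1 : ∀ i, |A i i| ≤ P := by
    intro i
    have h2 := abs_apply_le (A.mulVec (Pi.single i 1)) i
    have h3 := h (Pi.single i 1)
    rw [euclNorm_single, mul_one] at h3
    have h4 : A.mulVec (Pi.single i 1) i = A i i := by simp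
    rw [h4] at h2
    linarith
  calc |A.trace| ≤ ∑ i, |A i i| := Finset.abs_sum_le_sum_abs _ _
    _ ≤ ∑ _i : Fin d, P := Finset.sum_le_sum fun i _ => h1 i
    _ = d * P := by simp

lemma symm_bound {d : ℕ} (M : Matrix (Fin d) (Fin d) ℝ) (hM : M.IsHermitian) (P : ℝ) (hP : 0 ≤ P)
    (h : ∀ (c : ℝ) (u : Fin d → ℝ), u ≠ 0 → M.mulVec u = c • u → |c| ≤ P) (v : Fin d → ℝ) :
    euclNorm (M.mulVec v) ≤ P * euclNorm v := by
  have hb := hM.eigenvectorBasis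
  have he : ∀ i, |hM.eigenvalues i| ≤ P := by
    intro i
    refine h _ (hM.eigenvectorBasis i).ofLp ?_ (hM.mulVec_eigenvectorBasis i)
    intro h0
    have := hM.eigenvectorBasis.orthonormal.ne_zero i
    apply this
    ext j
    simpa using congrFun h0 j
  refine (sq_le_sq₀ (euclNorm_nonneg _) (mul_nonneg hP (euclNorm_nonneg v))).1 ?_
  rw [mul_pow, euclNorm_eq, euclNorm_eq, ← hM.eigenvectorBasis.sum_sq_norm_inner_right,
    ← hM.eigenvectorBasis.sum_sq_norm_inner_right (WithLp.toLp 2 v), Finset.mul_sum]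
  apply Finset.sum_le_sum
  intro i _
  have hi : inner ℝ (hM.eigenvectorBasis i) (WithLp.toLp 2 (M.mulVec v)) =
      hM.eigenvalues i * inner ℝ (hM.eigenvectorBasis i) (WithLp.toLp 2 v) := by
    have e1 : ∀ w : Fin d → ℝ, inner ℝ (hM.eigenvectorBasis i) (WithLp.toLp 2 w) =
        (hM.eigenvectorBasis i).ofLp ⬝ᵥ w := by
      intro w
      rw [EuclideanSpace.inner_eq_star_dotProduct]
      simp [dotProduct_comm]
    rw [e1, e1, dotProduct_mulVec, ← mulVec_transpose]
    have : Mᵀ = M := by simpa using hM.eq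
    rw [this, hM.mulVec_eigenvectorBasis, smul_dotProduct, smul_eq_mul]
  rw [hi, norm_mul, mul_pow]
  gcongr
  simpa using he i

lemma conj_bound {d : ℕ} (S H : Matrix (Fin d) (Fin d) ℝ) (hS : S.PosDef) (hH : Hᵀ = H)
    (P : ℝ) (hP : 0 ≤ P)
    (h : ∀ v : Fin d → ℝ, euclNorm ((S * S * H).mulVec v) ≤ P * euclNorm v) (v : Fin d → ℝ) :
    euclNorm ((S * H * S).mulVec v) ≤ P * euclNorm v := by
  have hSt : Sᵀ = S := by simpa using hS.isHermitian.eq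
  have hM : (S * H * S).IsHermitian := by
    rw [IsHermitian, conjTranspose_eq_transpose_of_trivial]
    simp [hSt, hH, Matrix.mul_assoc]
  refine symm_bound _ hM P hP ?_ v
  intro c u hu hcu
  have hSu : S.mulVec u ≠ 0 := by
    intro h0
    exact hu (Matrix.mulVec_injective_of_isUnit hS.isUnit (by simpa using h0))
  have h1 := h (S.mulVec u)
  have h2 : (S * S * H).mulVec (S.mulVec u) = c • S.mulVec u := by
    rw [← mulVec_smul, ← hcu, mulVec_mulVec, mulVec_mulVec]
    simp only [Matrix.mul_assoc]
  rw [h2, euclNorm_smul] at h1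
  have : 0 < euclNorm (S.mulVec u) := by
    rw [euclNorm_eq, norm_pos_iff]
    intro h0
    apply hSu
    simpa using h0
  exact le_of_mul_le_mul_right h1 this

lemma contDiff_log {d : ℕ} (f : (Fin d → ℝ) → ℝ) (hf_pos : ∀ x, 0 < f x) (hf : ContDiff ℝ 2 f) :
    ContDiff ℝ 2 (fun y => Real.log (f y)) := hf.log fun x => (hf_pos x).ne'

lemma diff_fderiv {d : ℕ} (L : (Fin d → ℝ) → ℝ) (hL : ContDiff ℝ 2 L) :
    Differentiable ℝ (fderiv ℝ L) :=
  (hL.fderiv_right (m := 1) (by norm_num)).differentiable (by norm_num)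

lemma hessLog_apply {d : ℕ} (f : (Fin d → ℝ) → ℝ) (hf_pos : ∀ x, 0 < f x) (hf : ContDiff ℝ 2 f)
    (x : Fin d → ℝ) (i j : Fin d) : hessLog f x i j =
      fderiv ℝ (fderiv ℝ (fun y => Real.log (f y))) x (Pi.single i 1) (Pi.single j 1) := by
  have h := ((diff_fderiv _ (contDiff_log f hf_pos hf)) x).hasFDerivAt.clm_apply
    (hasFDerivAt_const (Pi.single j (1 : ℝ) : Fin d → ℝ) x)
  simp only [hessLog, Matrix.of_apply]
  rw [h.fderiv]
  simp

lemma hess_symm {d : ℕ} (f : (Fin d → ℝ) → ℝ) (hf_pos : ∀ x, 0 < f x) (hf : ContDiff ℝ 2 f)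
    (x : Fin d → ℝ) : (hessLog f x)ᵀ = hessLog f x := by
  ext i j
  rw [transpose_apply, hessLog_apply f hf_pos hf, hessLog_apply f hf_pos hf]
  exact ((contDiff_log f hf_pos hf).contDiffAt.isSymmSndFDerivAt (by simp)) _ _

lemma clm_sum {d : ℕ} (A : (Fin d → ℝ) →L[ℝ] ℝ) (v : Fin d → ℝ) :
    A v = ∑ j, A (Pi.single j 1) * v j := by
  have h := LinearMap.pi_apply_eq_sum_univ A.toLinearMap v
  simp only [ContinuousLinearMap.coe_coe, smul_eq_mul] at h
  rw [h]
  refine Finset.sum_congr rfl fun j _ => ?_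
  rw [mul_comm]
  congr 2
  ext k
  simp [Pi.single_apply, eq_comm]

lemma grad_deriv {d : ℕ} (f : (Fin d → ℝ) → ℝ) (hf_pos : ∀ x, 0 < f x) (hf : ContDiff ℝ 2 f)
    (x v : Fin d → ℝ) (t : ℝ) (i : Fin d) :
    HasDerivAt (fun t : ℝ => gradLog f (x + t • v) i) ((hessLog f (x + t • v)).mulVec v i) t := by
  have h := ((diff_fderiv _ (contDiff_log f hf_pos hf)) (x + t • v)).hasFDerivAt
  have hl : HasDerivAt (fun t : ℝ => x + t • v) v t := by
    simpa using ((hasDerivAt_id t).smul_const v).const_add x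
  have h1 : HasDerivAt (fun t : ℝ => fderiv ℝ (fun y => Real.log (f y)) (x + t • v))
      (fderiv ℝ (fderiv ℝ (fun y => Real.log (f y))) (x + t • v) v) t :=
    h.comp_hasDerivAt t hl
  have h2 : HasDerivAt (fun t : ℝ => gradLog f (x + t • v) i)
      (fderiv ℝ (fderiv ℝ (fun y => Real.log (f y))) (x + t • v) v (Pi.single i 1)) t := by
    simpa [gradLog] using h1.clm_apply (hasDerivAt_const t (Pi.single i (1 : ℝ) : Fin d → ℝ))
  have hs := ((contDiff_log f hf_pos hf).contDiffAt (x := x + t • v)).isSymmSndFDerivAt (by simp)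
  rw [hs v (Pi.single i 1), clm_sum] at h2
  simpa only [mulVec, dotProduct, hessLog_apply f hf_pos hf] using h2

lemma grad_bound {d : ℕ}
    (f : (Fin d → ℝ) → ℝ) (hf_pos : ∀ x, 0 < f x) (hf : ContDiff ℝ 2 f)
    (S : Matrix (Fin d) (Fin d) ℝ) (hS : S.PosDef)
    (R : Set (Fin d → ℝ)) (hconv : Convex ℝ R)
    (xhat : Fin d → ℝ) (hxhat : xhat ∈ R)
    (D P : ℝ) (hP : 0 ≤ P)
    (hDbd : ∀ x ∈ R, euclNorm (S⁻¹.mulVec (x - xhat)) ≤ D)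
    (hPbd : ∀ x ∈ R, ∀ v : Fin d → ℝ, euclNorm ((S * S * hessLog f x).mulVec v) ≤ P * euclNorm v)
    (x : Fin d → ℝ) (hx : x ∈ R) :
    euclNorm (S.mulVec (gradLog f x)) ≤ euclNorm (S.mulVec (gradLog f xhat)) + D * P := by
  set v := x - xhat with hv
  set w := S.mulVec (gradLog f x) with hw
  have hder : ∀ t : ℝ, HasDerivAt (fun t : ℝ => w ⬝ᵥ S.mulVec (gradLog f (xhat + t • v)))
      (w ⬝ᵥ S.mulVec ((hessLog f (xhat + t • v)).mulVec v)) t := by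
    intro t
    simp only [dotProduct, mulVec]
    refine HasDerivAt.fun_sum fun i _ => HasDerivAt.const_mul _ ?_
    refine HasDerivAt.fun_sum fun j _ => HasDerivAt.const_mul _ ?_
    exact grad_deriv f hf_pos hf xhat v t j
  obtain ⟨t, ht, hEq⟩ := exists_hasDerivAt_eq_slope _ _ (zero_lt_one' ℝ)
    (fun t _ => (hder t).continuousAt.continuousWithinAt) (fun t _ => hder t)
  have hmem : xhat + t • v ∈ R := hconv.add_smul_sub_mem hxhat hx ⟨ht.1.le, ht.2.le⟩
  have hSd : IsUnit S.det := (Matrix.isUnit_iff_isUnit_det S).1 hS.isUnit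
  have hvv : S.mulVec ((hessLog f (xhat + t • v)).mulVec v) =
      (S * hessLog f (xhat + t • v) * S).mulVec (S⁻¹.mulVec v) := by
    rw [mulVec_mulVec, mulVec_mulVec, Matrix.mul_assoc (S * _), Matrix.mul_nonsing_inv _ hSd,
      Matrix.mul_one]
  have hb := conj_bound S _ hS (hess_symm f hf_pos hf _) P hP (hPbd _ hmem) (S⁻¹.mulVec v)
  rw [← hvv] at hb
  have hb2 : euclNorm (S.mulVec ((hessLog f (xhat + t • v)).mulVec v)) ≤ D * P := by
    refine hb.trans ?_
    rw [mul_comm D]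
    exact mul_le_mul_of_nonneg_left (hDbd x hx) hP
  have h1 := dot_le w (S.mulVec ((hessLog f (xhat + t • v)).mulVec v))
  have h0 := dot_le w (S.mulVec (gradLog f xhat))
  have hxv : xhat + v = x := by simp [hv]
  simp only [one_smul, zero_smul, add_zero, sub_zero, div_one, hxv] at hEq
  rw [← hw, ← euclNorm_sq] at hEq
  have hw0 := euclNorm_nonneg w
  rcases hw0.eq_or_lt with h | h
  · rw [← h]
    have := euclNorm_nonneg (S.mulVec (gradLog f xhat))
    have := euclNorm_nonneg (S.mulVec ((hessLog f (xhat + t • v)).mulVec v))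
    linarith
  · have h3 := mul_le_mul_of_nonneg_left hb2 hw0
    refine le_of_mul_le_mul_left ?_ h
    nlinarith

/-- Proposition 3 of the paper: generic local lower and upper bounds for `φ`
on a convex region `R`, in terms of a bound `D` on `‖Λ^{-1/2}(x - x̂)‖` and a bound `P` on the
operator norm of `Λ ∇²log f(x)` over `R`. -/
theorem statement3 (d : ℕ) (hd : 1 ≤ d)
    (f : (Fin d → ℝ) → ℝ) (hf_pos : ∀ x, 0 < f x) (hf : ContDiff ℝ 2 f)
    (Λ Λsq : Matrix (Fin d) (Fin d) ℝ) (hΛ : Λ.PosDef) (hΛsq : Λsq.PosDef)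
    (hsq : Λsq * Λsq = Λ)
    (R : Set (Fin d → ℝ)) (hconv : Convex ℝ R)
    (xhat : Fin d → ℝ) (hxhat : xhat ∈ R)
    (D P : ℝ) (hD : 0 ≤ D) (hP : 0 ≤ P)
    (hDbd : ∀ x ∈ R, euclNorm (Λsq⁻¹.mulVec (x - xhat)) ≤ D)
    (hPbd : ∀ x ∈ R, ∀ v : Fin d → ℝ, euclNorm ((Λ * hessLog f x).mulVec v) ≤ P * euclNorm v) :
    ∀ x ∈ R,
      -(d * P) / 2 ≤ phiFn f Λ x ∧
        phiFn f Λ x ≤ ((euclNorm (Λsq.mulVec (gradLog f xhat)) + D * P) ^ 2 + d * P) / 2 := by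
  intro x hx
  subst hsq
  have hSt : Λsqᵀ = Λsq := by simpa using hΛsq.isHermitian.eq
  have htr := abs_le.1 (abs_trace_le _ P (hPbd x hx))
  have hg := grad_bound f hf_pos hf Λsq hΛsq R hconv xhat hxhat D P hP hDbd hPbd x hx
  have hq : gradLog f x ⬝ᵥ (Λsq * Λsq).mulVec (gradLog f x) =
      euclNorm (Λsq.mulVec (gradLog f x)) ^ 2 := by
    rw [euclNorm_sq, ← mulVec_mulVec, dotProduct_mulVec, ← mulVec_transpose, hSt]
  have hg2 := pow_le_pow_left₀ (euclNorm_nonneg _) hg 2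
  have hg3 := sq_nonneg (euclNorm (Λsq.mulVec (gradLog f x)))
  simp only [phiFn, hq]
  constructor <;> linarith [htr.1, htr.2]
end

section
/- Let s < t be reals, Δ := t − s, let h : ℝ → ℝ be measurable with L ≤ h(u) ≤ U for all u ∈ [s, t], where L < U are real constants. Let κ be Poisson distributed with mean (U − L)Δ, and conditionally on κ = k let ξ_1, …, ξ_k be i.i.d. uniform on [s, t]. Then the GPE-1 estimator ρ̃^{(a)} := e^{−L Δ} · ∏_{i=1}^{κ} ( (U − h(ξ_i)) / (U − L) ) satisfies: (i) E[ρ̃^{(a)}] = exp{ −∫_s^t h(u) du }; (ii) 0 ≤ ρ̃^{(a)} ≤ e^{−L Δ} almost surely, so ρ̃^{(a)} has finite variance. -/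
open MeasureTheory

/-- GPE-1 estimator: with `κ ∼ Poisson((U-L)Δ)` and conditionally i.i.d.
uniform times `ξ_1, …, ξ_κ` on `[s,t]`, the estimator
`ρ̃⁽ᵃ⁾ = e^{-LΔ} ∏ᵢ (U - h(ξᵢ))/(U - L)`
(i) has expectation `exp(-∫_s^t h)` — the expectation over the mixture law being the Poisson
mixture of expectations with respect to the `k`-fold product of the uniform distribution on
`[s,t]` (written as `(t-s)^{-k}` times the integral over the product of restricted Lebesgue
measures) — and (ii) takes values in `[0, e^{-LΔ}]`. -/
theorem statement5 (s t : ℝ) (hst : s < t) (h : ℝ → ℝ) (hmeas : Measurable h)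
    (L U : ℝ) (hLU : L < U)
    (hL : ∀ u ∈ Set.Icc s t, L ≤ h u) (hU : ∀ u ∈ Set.Icc s t, h u ≤ U) :
    (∑' k : ℕ,
        (Real.exp (-((U - L) * (t - s))) * ((U - L) * (t - s)) ^ k / (Nat.factorial k)) *
          (((t - s) ^ k)⁻¹ *
            ∫ ξ : Fin k → ℝ,
              (Real.exp (-(L * (t - s))) * ∏ i, (U - h (ξ i)) / (U - L))
              ∂(Measure.pi fun _ : Fin k => volume.restrict (Set.Icc s t))))
      = Real.exp (-∫ u in s..t, h u)
    ∧ ∀ (k : ℕ) (ξ : Fin k → ℝ), (∀ i, ξ i ∈ Set.Icc s t) →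
        0 ≤ Real.exp (-(L * (t - s))) * ∏ i, (U - h (ξ i)) / (U - L) ∧
          Real.exp (-(L * (t - s))) * ∏ i, (U - h (ξ i)) / (U - L)
            ≤ Real.exp (-(L * (t - s))) := by
  have hUL : 0 < U - L := sub_pos.mpr hLU
  have ht : 0 < t - s := sub_pos.mpr hst
  constructor
  · have hint : IntegrableOn h (Set.Icc s t) := by
      refine Measure.integrableOn_of_bounded (M := max |L| |U|) (by simp)
        hmeas.aestronglyMeasurable ?_
      filter_upwards [ae_restrict_mem measurableSet_Icc] with u hu
      rw [Real.norm_eq_abs]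
      exact abs_le_max_abs_abs (hL u hu) (hU u hu)
    have hI : ∫ u in Set.Icc s t, (U - h u) / (U - L)
        = (U * (t - s) - ∫ u in s..t, h u) / (U - L) := by
      rw [integral_div, integral_sub (by simp) hint,
        intervalIntegral.integral_of_le hst.le, integral_Icc_eq_integral_Ioc (f := h)]
      simp [hst.le, mul_comm]
    have hterm : ∀ k : ℕ,
        (Real.exp (-((U - L) * (t - s))) * ((U - L) * (t - s)) ^ k / (Nat.factorial k)) *
          (((t - s) ^ k)⁻¹ *
            ∫ ξ : Fin k → ℝ,
              (Real.exp (-(L * (t - s))) * ∏ i, (U - h (ξ i)) / (U - L))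
              ∂(Measure.pi fun _ : Fin k => volume.restrict (Set.Icc s t)))
        = Real.exp (-(U * (t - s))) *
          ((U * (t - s) - ∫ u in s..t, h u) ^ k / (Nat.factorial k)) := by
      intro k
      rw [integral_const_mul,
        integral_fintype_prod_eq_prod (fun (_ : Fin k) u => (U - h u) / (U - L))]
      simp only [hI, Finset.prod_const, Finset.card_univ, Fintype.card_fin]
      have he : Real.exp (-(U * (t - s)))
          = Real.exp (-((U - L) * (t - s))) * Real.exp (-(L * (t - s))) := by
        rw [← Real.exp_add]; congr 1; ring
      rw [he, mul_pow, div_pow]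
      field_simp
    rw [tsum_congr hterm, tsum_mul_left]
    have hs := (NormedSpace.expSeries_div_hasSum_exp
      (U * (t - s) - ∫ u in s..t, h u)).tsum_eq
    rw [hs, ← Real.exp_eq_exp_ℝ, ← Real.exp_add]
    congr 1; ring
  · intro k ξ hξ
    have h0 : ∀ i, 0 ≤ (U - h (ξ i)) / (U - L) := fun i =>
      div_nonneg (sub_nonneg.mpr (hU _ (hξ i))) hUL.le
    have h1 : ∀ i, (U - h (ξ i)) / (U - L) ≤ 1 := fun i => by
      rw [div_le_one hUL]; linarith [hL _ (hξ i)]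
    exact ⟨mul_nonneg (Real.exp_pos _).le (Finset.prod_nonneg fun i _ => h0 i),
      mul_le_of_le_one_right (Real.exp_pos _).le
        (Finset.prod_le_one (fun i _ => h0 i) fun i _ => h1 i)⟩
end

section
/- Let d ≥ 1 and C ≥ 2 be integers and let b, m, T, k_1, λ > 0 be reals. Suppose σ_a² = b(C−1)λ/m and T ≥ b C^{3/2} k_1 / m. Then exp{ −σ_a² (b/m) / ( (T/C + b/m)(T/C + 2b/m) ) } · [ 1 + (Cb/(Tm))² / (1 + 2Cb/(Tm)) ]^{−(C−1)d/2} ≥ exp{ −λ/k_1² − d/(2k_1²) }. -/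
/-- Corollary 12(a) of the paper: lower bound on the limiting
`N⁻¹·CESS₀` under the sub-posterior homogeneity condition `SH(λ)`,
when `T ≥ b C^{3/2} k₁ / m`. -/
theorem statement10 (d C : ℕ) (hd : 1 ≤ d) (hC : 2 ≤ C)
    (b m T k₁ lam σa2 : ℝ)
    (hb : 0 < b) (hm : 0 < m) (hT : 0 < T) (hk₁ : 0 < k₁) (hlam : 0 < lam)
    (hσ : σa2 = b * ((C : ℝ) - 1) * lam / m)
    (hT2 : b * (C : ℝ) ^ ((3 : ℝ) / 2) * k₁ / m ≤ T) :
    Real.exp (-(lam / k₁ ^ 2) - (d : ℝ) / (2 * k₁ ^ 2)) ≤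
      Real.exp (-(σa2 * (b / m) / ((T / C + b / m) * (T / C + 2 * b / m)))) *
        (1 + ((C : ℝ) * b / (T * m)) ^ 2 / (1 + 2 * (C : ℝ) * b / (T * m))) ^
          (-(((C : ℝ) - 1) * d / 2)) := by
  have hC2 : (2 : ℝ) ≤ C := by exact_mod_cast hC
  have hC0 : (0 : ℝ) < C := by linarith
  have hd0 : (0 : ℝ) ≤ d := Nat.cast_nonneg d
  have hpow : ((C : ℝ) ^ ((3 : ℝ) / 2)) ^ 2 = (C : ℝ) ^ 3 := by
    rw [← Real.rpow_natCast, ← Real.rpow_mul hC0.le, ← Real.rpow_natCast]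
    norm_num
  have hsq : b ^ 2 * (C : ℝ) ^ 3 * k₁ ^ 2 ≤ (T * m) ^ 2 := by
    have h1 : b * (C : ℝ) ^ ((3 : ℝ) / 2) * k₁ ≤ T * m := (div_le_iff₀ hm).mp hT2
    have h2 := pow_le_pow_left₀ (by positivity) h1 2
    calc b ^ 2 * (C : ℝ) ^ 3 * k₁ ^ 2 = (b * (C : ℝ) ^ ((3 : ℝ) / 2) * k₁) ^ 2 := by
          rw [mul_pow, mul_pow, hpow]
      _ ≤ _ := h2
  have hx0 : 0 < (C : ℝ) * b / (T * m) := by positivity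
  have hx2 : 2 * (C : ℝ) * b / (T * m) = 2 * ((C : ℝ) * b / (T * m)) := by ring
  have hA : σa2 * (b / m) / ((T / C + b / m) * (T / C + 2 * b / m)) =
      lam * (((C : ℝ) - 1) * (((C : ℝ) * b / (T * m)) ^ 2 /
        ((1 + (C : ℝ) * b / (T * m)) * (1 + 2 * ((C : ℝ) * b / (T * m)))))) := by
    rw [hσ]
    field_simp
  have hkey : ((C : ℝ) - 1) * ((C : ℝ) * b / (T * m)) ^ 2 ≤ 1 / k₁ ^ 2 := by
    have h3 : (C : ℝ) * ((C : ℝ) * b / (T * m)) ^ 2 ≤ 1 / k₁ ^ 2 := by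
      rw [div_pow, ← mul_div_assoc, div_le_div_iff₀ (by positivity) (by positivity)]
      nlinarith [hsq]
    nlinarith [sq_nonneg ((C : ℝ) * b / (T * m))]
  rw [hA, hx2]
  generalize (C : ℝ) * b / (T * m) = x at *
  have hC1 : (0 : ℝ) ≤ (C : ℝ) - 1 := by linarith
  have hy1 : x ^ 2 / ((1 + x) * (1 + 2 * x)) ≤ x ^ 2 :=
    div_le_self (by positivity) (by nlinarith)
  have hy2 : x ^ 2 / (1 + 2 * x) ≤ x ^ 2 :=
    div_le_self (by positivity) (by linarith)
  have hy0 : 0 ≤ x ^ 2 / (1 + 2 * x) := by positivity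
  have e1 : lam * (((C : ℝ) - 1) * (x ^ 2 / ((1 + x) * (1 + 2 * x)))) ≤ lam / k₁ ^ 2 := by
    rw [div_eq_mul_one_div lam]
    exact mul_le_mul_of_nonneg_left
      ((mul_le_mul_of_nonneg_left hy1 hC1).trans hkey) hlam.le
  generalize x ^ 2 / (1 + 2 * x) = y at *
  have e2 : Real.log (1 + y) * (((C : ℝ) - 1) * d / 2) ≤ (d : ℝ) / (2 * k₁ ^ 2) := by
    have hl : Real.log (1 + y) ≤ y := by
      have := Real.log_le_sub_one_of_pos (show 0 < 1 + y by linarith)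
      linarith
    have h4 : ((C : ℝ) - 1) * Real.log (1 + y) ≤ 1 / k₁ ^ 2 :=
      (mul_le_mul_of_nonneg_left (hl.trans hy2) hC1).trans hkey
    have h5 := mul_le_mul_of_nonneg_left h4 (show (0 : ℝ) ≤ d / 2 by positivity)
    calc _ = (d : ℝ) / 2 * (((C : ℝ) - 1) * Real.log (1 + y)) := by ring
      _ ≤ _ := h5
      _ = _ := by field_simp
  rw [Real.rpow_def_of_pos (by linarith), ← Real.exp_add]
  apply Real.exp_le_exp.mpr
  linarith
end

section
/- Let d ≥ 1 and C ≥ 2 be integers and let b, m, T, k_1, k_2, γ > 0 be reals. Suppose σ_a² = bγ, T ≥ b C^{3/2} k_1 / m, and T ≥ C^{1/2} k_2. Then exp{ −σ_a² (b/m) / ( (T/C + b/m)(T/C + 2b/m) ) } · [ 1 + (Cb/(Tm))² / (1 + 2Cb/(Tm)) ]^{−(C−1)d/2} ≥ exp{ −bγ/(k_1 k_2) − d/(2k_1²) }. -/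
/-- Corollary 12(b) of the paper: lower bound on the limiting
`N⁻¹·CESS₀` under the super sub-posterior heterogeneity condition `SSH(γ)`,
when `T ≥ b C^{3/2} k₁ / m` and `T ≥ C^{1/2} k₂`. -/
theorem statement11 (d C : ℕ) (hd : 1 ≤ d) (hC : 2 ≤ C)
    (b m T k₁ k₂ γ σa2 : ℝ)
    (hb : 0 < b) (hm : 0 < m) (hT : 0 < T) (hk₁ : 0 < k₁) (hk₂ : 0 < k₂) (hγ : 0 < γ)
    (hσ : σa2 = b * γ)
    (hT2 : b * (C : ℝ) ^ ((3 : ℝ) / 2) * k₁ / m ≤ T)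
    (hT3 : (C : ℝ) ^ ((1 : ℝ) / 2) * k₂ ≤ T) :
    Real.exp (-(b * γ / (k₁ * k₂)) - (d : ℝ) / (2 * k₁ ^ 2)) ≤
      Real.exp (-(σa2 * (b / m) / ((T / C + b / m) * (T / C + 2 * b / m)))) *
        (1 + ((C : ℝ) * b / (T * m)) ^ 2 / (1 + 2 * (C : ℝ) * b / (T * m))) ^
          (-(((C : ℝ) - 1) * d / 2)) := by
  subst hσ
  have hC2 : (2 : ℝ) ≤ (C : ℝ) := by exact_mod_cast hC
  have hd0 : (0 : ℝ) ≤ (d : ℝ) := Nat.cast_nonneg d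
  generalize (C : ℝ) = c at *
  generalize (d : ℝ) = e at *
  have hc : 0 < c := by linarith
  obtain ⟨s, hs, hs0⟩ : ∃ s : ℝ, c ^ ((1 : ℝ) / 2) = s ∧ 0 < s :=
    ⟨_, rfl, Real.rpow_pos_of_pos hc _⟩
  have hcs : c = s ^ 2 := by
    rw [← hs, ← Real.rpow_natCast, ← Real.rpow_mul hc.le]; norm_num
  have hs3 : c ^ ((3 : ℝ) / 2) = s ^ 3 := by
    rw [← hs, ← Real.rpow_natCast, ← Real.rpow_mul hc.le]; norm_num
  rw [hs3] at hT2
  rw [hs] at hT3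
  have hT2' : b * s ^ 3 * k₁ ≤ T * m := (div_le_iff₀ hm).1 hT2
  have hx0 : 0 < c * b / (T * m) := by positivity
  have hx : (c * b / (T * m)) * (s * k₁) ≤ 1 := by
    rw [div_mul_eq_mul_div, div_le_one (by positivity), hcs]
    linarith
  have hx2' : 2 * c * b / (T * m) = 2 * (c * b / (T * m)) := by ring
  rw [hx2']
  have hA : b * γ * (b / m) / ((T / c + b / m) * (T / c + 2 * b / m)) ≤ b * γ / (k₁ * k₂) := by
    rw [mul_div_assoc, div_eq_mul_inv (b * γ) (k₁ * k₂)]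
    apply mul_le_mul_of_nonneg_left _ (by positivity)
    have h1 : b / m * (k₁ * k₂) ≤ (T / c) * (T / c) := by
      have h2 : (b * s ^ 3 * k₁) * (s * k₂) ≤ (T * m) * T :=
        mul_le_mul hT2' hT3 (by positivity) (by positivity)
      rw [hcs, div_mul_eq_mul_div, div_mul_div_comm, div_le_div_iff₀ hm (by positivity)]
      linarith
    have h3 : (T / c) * (T / c) ≤ (T / c + b / m) * (T / c + 2 * b / m) := by
      have : 0 < b / m := by positivity
      have : 0 < 2 * b / m := by positivity
      have : 0 < T / c := by positivity
      gcongr <;> linarith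
    rw [← one_div, div_le_div_iff₀ (by positivity) (by positivity)]
    linarith
  generalize c * b / (T * m) = x at *
  have hy0 : 0 ≤ x ^ 2 / (1 + 2 * x) := by positivity
  have hy1 : x ^ 2 / (1 + 2 * x) ≤ x ^ 2 := div_le_self (by positivity) (by linarith)
  generalize x ^ 2 / (1 + 2 * x) = y at *
  rw [Real.rpow_def_of_pos (by linarith), ← Real.exp_add]
  apply Real.exp_le_exp.2
  have hl : Real.log (1 + y) ≤ x ^ 2 := by
    have := Real.log_le_sub_one_of_pos (show 0 < 1 + y by linarith)
    linarith
  have hB : Real.log (1 + y) * ((c - 1) * e / 2) ≤ e / (2 * k₁ ^ 2) := by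
    calc Real.log (1 + y) * ((c - 1) * e / 2) ≤ x ^ 2 * (c * e / 2) := by
          apply mul_le_mul hl _ _ (by positivity)
          · gcongr; linarith
          · have : 0 ≤ c - 1 := by linarith
            positivity
      _ ≤ e / (2 * k₁ ^ 2) := by
          rw [le_div_iff₀ (by positivity), hcs]
          have h4 : (x * (s * k₁)) ^ 2 ≤ 1 := pow_le_one₀ (by positivity) hx
          have := mul_le_mul_of_nonneg_left h4 hd0
          linarith
  linarith
end

section
/- Let ζ′ ∈ (0, 1), write L := log ζ′ < 0, and let c_1, c_2 > 0 be reals; set A := c_2/c_1². Define k_4 := [ (A − 2L) − √( (2L − A)² − 4L² ) ] / 2. Then: (i) (2L − A)² − 4L² = A(A − 4L) > 0, so k_4 is a real number; (ii) 0 < k_4 < −L; (iii) k_4 satisfies k_4² + (2L − A) k_4 + L² = 0, equivalently c_1(−L − k_4) = √(c_2 k_4); and (iv) for every k ∈ (0, −L), min{ c_1(−L − k), √(c_2 k) } ≤ √(c_2 k_4), i.e. k_4 maximises the interval size min{ c_1(−L − k), √(c_2 k) } over k ∈ (0, −L). -/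
/-- Proposition 18 of the paper: with `L = log ζ′ < 0`, `A = c₂/c₁²`,
the root `k₄ = ((A - 2L) - √((2L - A)² - 4L²))/2` is well-defined, lies in `(0, -L)`, satisfies
the quadratic `k₄² + (2L - A)k₄ + L² = 0` (equivalently `c₁(-L - k₄) = √(c₂ k₄)`), and
maximises the interval size `min{c₁(-L - k), √(c₂ k)}` over `k ∈ (0, -L)`. -/
theorem statement14 (ζ' : ℝ) (hζ : ζ' ∈ Set.Ioo (0 : ℝ) 1)
    (c₁ c₂ : ℝ) (hc₁ : 0 < c₁) (hc₂ : 0 < c₂) :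
    let L : ℝ := Real.log ζ'
    let A : ℝ := c₂ / c₁ ^ 2
    let k₄ : ℝ := ((A - 2 * L) - Real.sqrt ((2 * L - A) ^ 2 - 4 * L ^ 2)) / 2
    L < 0 ∧
      ((2 * L - A) ^ 2 - 4 * L ^ 2 = A * (A - 4 * L) ∧ 0 < A * (A - 4 * L)) ∧
      (0 < k₄ ∧ k₄ < -L) ∧
      (k₄ ^ 2 + (2 * L - A) * k₄ + L ^ 2 = 0 ∧ c₁ * (-L - k₄) = Real.sqrt (c₂ * k₄)) ∧
      (∀ k ∈ Set.Ioo (0 : ℝ) (-L),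
        min (c₁ * (-L - k)) (Real.sqrt (c₂ * k)) ≤ Real.sqrt (c₂ * k₄)) := by
  intro L A k₄
  have hL : L < 0 := Real.log_neg hζ.1 hζ.2
  have hA : 0 < A := by positivity
  have hcA : c₂ = A * c₁ ^ 2 := by
    simp only [A]
    field_simp
  have hD : (2 * L - A) ^ 2 - 4 * L ^ 2 = A * (A - 4 * L) := by ring
  have hDpos : 0 < A * (A - 4 * L) := mul_pos hA (by linarith)
  obtain ⟨s, hs⟩ : ∃ s, s = Real.sqrt ((2 * L - A) ^ 2 - 4 * L ^ 2) := ⟨_, rfl⟩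
  have hs2 : s ^ 2 = (2 * L - A) ^ 2 - 4 * L ^ 2 := by
    rw [hs]
    exact Real.sq_sqrt (by rw [hD]; exact hDpos.le)
  have hs0 : 0 ≤ s := by
    rw [hs]
    exact Real.sqrt_nonneg _
  have hk : k₄ = ((A - 2 * L) - s) / 2 := by rw [hs]
  clear_value k₄ A L
  have hs1 : s < A - 2 * L := by
    apply lt_of_pow_lt_pow_left₀ 2 (by linarith)
    nlinarith [mul_pos_of_neg_of_neg hL hL]
  have hs3 : A < s := by
    apply lt_of_pow_lt_pow_left₀ 2 hs0
    nlinarith [mul_pos hA (neg_pos.2 hL)]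
  have hk0 : 0 < k₄ := by linarith
  have hkL : k₄ < -L := by linarith
  have hq : k₄ ^ 2 + (2 * L - A) * k₄ + L ^ 2 = 0 := by
    rw [hk]
    linear_combination hs2 / 4
  have he : c₁ * (-L - k₄) = Real.sqrt (c₂ * k₄) := by
    symm
    rw [Real.sqrt_eq_iff_mul_self_eq (by positivity) (mul_nonneg hc₁.le (by linarith)), hcA]
    linear_combination -c₁ ^ 2 * hq
  refine ⟨hL, ⟨hD, hDpos⟩, ⟨hk0, hkL⟩, ⟨hq, he⟩, ?_⟩
  intro k _
  rcases le_total k k₄ with h | h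
  · exact (min_le_right _ _).trans (Real.sqrt_le_sqrt (mul_le_mul_of_nonneg_left h hc₂.le))
  · rw [← he]
    exact (min_le_left _ _).trans (mul_le_mul_of_nonneg_left (by linarith) hc₁.le)
end

section
/- Let d ≥ 1 and K ≥ 1 be integers, let Λ_1, …, Λ_K be symmetric positive definite d×d real matrices, set Λ_𝒞 := (∑_{c=1}^K Λ_c^{−1})^{−1}, and let τ > 0. Define H : (ℝ^d)^K → (0, ∞) by H(x_1, …, x_K) := ∫_{ℝ^d} ∏_{c=1}^K exp{ −(y − x_c)ᵀ Λ_c^{−1} (y − x_c) / (2τ) } dy. Then for each c ∈ {1, …, K}, the gradient of log H with respect to the block variable x_c equals Λ_c^{−1} ( x̃ − x_c ) / τ, where x̃ := Λ_𝒞 ∑_{j=1}^K Λ_j^{−1} x_j. -/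
open MeasureTheory Matrix

lemma quad_integrable {d : ℕ} (S : Matrix (Fin d) (Fin d) ℝ) (hS : S.PosDef) (b : ℝ) (hb : 0 < b) :
    Integrable (fun y : Fin d → ℝ => Real.exp (-b * (y ⬝ᵥ S.mulVec y))) := by
  obtain ⟨B, hB, hSB⟩ : ∃ B : Matrix (Fin d) (Fin d) ℝ, IsUnit B ∧ S = Bᵀ * B := by
    obtain ⟨B, h⟩ : ∃ B : Matrix (Fin d) (Fin d) ℝ, S = Bᴴ * B := by
      open scoped MatrixOrder in
      exact CStarAlgebra.nonneg_iff_eq_star_mul_self.mp hS.posSemidef.nonneg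
    have h' : S = Bᵀ * B := by simpa using h
    refine ⟨B, ?_, h'⟩
    have hu : IsUnit S.det := (Matrix.isUnit_iff_isUnit_det S).1 hS.isUnit
    rw [h', Matrix.det_mul] at hu
    exact (Matrix.isUnit_iff_isUnit_det B).2 (isUnit_of_mul_isUnit_right hu)
  have hdet : B.det ≠ 0 := ((Matrix.isUnit_iff_isUnit_det B).1 hB).ne_zero
  have h1 : Integrable (fun y : Fin d → ℝ => ∏ i, Real.exp (-b * (y i) ^ 2)) :=
    Integrable.fintype_prod (f := fun _ t => Real.exp (-b * t ^ 2))
      (fun _ => integrable_exp_neg_mul_sq hb)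
  have h2 : Integrable (fun y : Fin d → ℝ => ∏ i, Real.exp (-b * (y i) ^ 2))
      (Measure.map (Matrix.toLin' B) volume) := by
    rw [Real.map_matrix_volume_pi_eq_smul_volume_pi hdet]
    exact h1.smul_measure ENNReal.ofReal_ne_top
  have h3 := h2.comp_measurable (LinearMap.continuous_of_finiteDimensional _).measurable
  refine h3.congr (Filter.Eventually.of_forall fun y => ?_)
  simp only [Function.comp, ← Real.exp_sum, Matrix.toLin'_apply]
  congr 1
  rw [← Finset.mul_sum, hSB, ← Matrix.mulVec_mulVec, Matrix.dotProduct_mulVec, Matrix.vecMul_transpose]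
  simp [dotProduct, sq]

lemma dot_symm {d : ℕ} (A : Matrix (Fin d) (Fin d) ℝ) (hA : Aᵀ = A) (p q : Fin d → ℝ) :
    q ⬝ᵥ A.mulVec p = p ⬝ᵥ A.mulVec q := by
  rw [Matrix.dotProduct_mulVec, ← Matrix.mulVec_transpose, hA, dotProduct_comm]

lemma quad_add {d : ℕ} (A : Matrix (Fin d) (Fin d) ℝ) (hA : Aᵀ = A) (p q : Fin d → ℝ) :
    (p + q) ⬝ᵥ A.mulVec (p + q) = p ⬝ᵥ A.mulVec p + 2 * (p ⬝ᵥ A.mulVec q) + q ⬝ᵥ A.mulVec q := by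
  have := dot_symm A hA p q
  simp only [Matrix.mulVec_add, dotProduct_add, add_dotProduct]
  linarith

lemma expo_eq {d K : ℕ} (P : Fin K → Matrix (Fin d) (Fin d) ℝ) (hP : ∀ c, (P c)ᵀ = P c)
    (S : Matrix (Fin d) (Fin d) ℝ) (hS : S = ∑ c, P c) (hdet : IsUnit S.det)
    (x : Fin K → Fin d → ℝ) (xt : Fin d → ℝ) (hxt : xt = S⁻¹.mulVec (∑ c, (P c).mulVec (x c)))
    (c : Fin K) (u y : Fin d → ℝ) :
    ∑ j, (y - Function.update x c (x c + u) j) ⬝ᵥ (P j).mulVec (y - Function.update x c (x c + u) j)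
      = (y - (xt + S⁻¹.mulVec ((P c).mulVec u))) ⬝ᵥ
          S.mulVec (y - (xt + S⁻¹.mulVec ((P c).mulVec u)))
        + (∑ j, (xt - x j) ⬝ᵥ (P j).mulVec (xt - x j)
          - 2 * ((P c).mulVec (xt - x c) ⬝ᵥ u) + u ⬝ᵥ (P c).mulVec u
          - (S⁻¹.mulVec ((P c).mulVec u)) ⬝ᵥ (P c).mulVec u) := by
  have hST : Sᵀ = S := by rw [hS, Matrix.transpose_sum]; simp [hP]
  have hS1 : ∀ v, S.mulVec (S⁻¹.mulVec v) = v := fun v => by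
    rw [Matrix.mulVec_mulVec, Matrix.mul_nonsing_inv _ hdet, Matrix.one_mulVec]
  -- step 1: effect of the update
  have e1 : ∀ j, (y - Function.update x c (x c + u) j) ⬝ᵥ
      (P j).mulVec (y - Function.update x c (x c + u) j)
      = (y - x j) ⬝ᵥ (P j).mulVec (y - x j) +
        if j = c then (- 2 * ((y - x c) ⬝ᵥ (P c).mulVec u) + u ⬝ᵥ (P c).mulVec u) else 0 := by
    intro j
    by_cases h : j = c
    · subst h
      have : y - (x j + u) = (y - x j) + (-u) := by abel
      rw [Function.update_self, this, quad_add _ (hP j)]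
      simp [Matrix.mulVec_neg]
      ring
    · simp [h]
  have e2 : ∀ j, (y - x j) ⬝ᵥ (P j).mulVec (y - x j) = (y - xt) ⬝ᵥ (P j).mulVec (y - xt)
      + 2 * ((y - xt) ⬝ᵥ (P j).mulVec (xt - x j)) + (xt - x j) ⬝ᵥ (P j).mulVec (xt - x j) := by
    intro j
    rw [← quad_add _ (hP j)]; simp
  have e3 : ∑ j, (y - xt) ⬝ᵥ (P j).mulVec (y - xt) = (y - xt) ⬝ᵥ S.mulVec (y - xt) := by
    rw [hS, Matrix.sum_mulVec, dotProduct_sum]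
  have e4 : ∑ j, (y - xt) ⬝ᵥ (P j).mulVec (xt - x j) = 0 := by
    rw [← dotProduct_sum]
    simp only [Matrix.mulVec_sub, Finset.sum_sub_distrib]
    rw [← Matrix.sum_mulVec, ← hS]
    nth_rw 2 [hxt]
    rw [hS1, sub_self, dotProduct_zero]
  have e5 : y - (xt + S⁻¹.mulVec ((P c).mulVec u))
      = (y - xt) + (-(S⁻¹.mulVec ((P c).mulVec u))) := by abel
  rw [e5, quad_add _ hST]
  simp only [e1, Finset.sum_add_distrib, e2, ← Finset.mul_sum, e3, e4]
  simp only [Matrix.mulVec_neg, hS1, dotProduct_neg, neg_dotProduct]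
  have e6 : (P c).mulVec (xt - x c) ⬝ᵥ u = (xt - x c) ⬝ᵥ (P c).mulVec u := by
    rw [dotProduct_comm, dot_symm _ (hP c)]
  have e7 : (y - x c) ⬝ᵥ (P c).mulVec u
      = (y - xt) ⬝ᵥ (P c).mulVec u + (xt - x c) ⬝ᵥ (P c).mulVec u := by
    rw [← add_dotProduct]; simp
  simp only [Finset.sum_ite_eq', Finset.mem_univ, if_true, e6, e7]
  ring

/-- the gradient of the logarithm of the space-time harmonic function
`H(x₁,…,x_K) = ∫ ∏_c exp(-(y-x_c)ᵀΛ_c⁻¹(y-x_c)/(2τ)) dy` with respect to the block variable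
`x_c` equals `Λ_c⁻¹(x̃ - x_c)/τ`: the map is differentiable in `x_c` and its derivative in any
direction `w` is `⟨Λ_c⁻¹(x̃ - x_c), w⟩/τ`. -/
theorem statement18 (d K : ℕ) (hd : 1 ≤ d) (hK : 1 ≤ K)
    (Λ : Fin K → Matrix (Fin d) (Fin d) ℝ) (hΛ : ∀ c, (Λ c).PosDef)
    (τ : ℝ) (hτ : 0 < τ) (x : Fin K → Fin d → ℝ) :
    let H : (Fin K → Fin d → ℝ) → ℝ := fun z =>
      ∫ y : Fin d → ℝ, ∏ c, Real.exp (-((y - z c) ⬝ᵥ (Λ c)⁻¹.mulVec (y - z c)) / (2 * τ))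
    let ΛC : Matrix (Fin d) (Fin d) ℝ := (∑ c, (Λ c)⁻¹)⁻¹
    let xt : Fin d → ℝ := ΛC.mulVec (∑ c, (Λ c)⁻¹.mulVec (x c))
    ∀ c : Fin K,
      DifferentiableAt ℝ (fun v => Real.log (H (Function.update x c v))) (x c) ∧
        ∀ w : Fin d → ℝ,
          fderiv ℝ (fun v => Real.log (H (Function.update x c v))) (x c) w
            = ((Λ c)⁻¹.mulVec (xt - x c) ⬝ᵥ w) / τ := by
  intro H ΛC xt c
  have hPpd : ∀ c, ((Λ c)⁻¹).PosDef := fun c => (hΛ c).inv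
  obtain ⟨S, hS⟩ : ∃ S, S = ∑ c, (Λ c)⁻¹ := ⟨_, rfl⟩
  have hSpd : S.PosDef := by
    rw [hS]
    have : Nonempty (Fin K) := ⟨c⟩
    exact Matrix.posDef_sum Finset.univ_nonempty (fun i _ => hPpd i)
  have hdet : IsUnit S.det := (Matrix.isUnit_iff_isUnit_det S).1 hSpd.isUnit
  have hP : ∀ c, ((Λ c)⁻¹)ᵀ = (Λ c)⁻¹ := fun c => by simpa using (hPpd c).isHermitian.eq
  have hxt : xt = S⁻¹.mulVec (∑ c, (Λ c)⁻¹.mulVec (x c)) := by rw [hS]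
  set P : Fin K → Matrix (Fin d) (Fin d) ℝ := fun c => (Λ c)⁻¹ with hPdef
  set b : ℝ := 1 / (2 * τ) with hb
  have hbpos : 0 < b := by positivity
  have hint := quad_integrable S hSpd b hbpos
  set I : ℝ := ∫ y : Fin d → ℝ, Real.exp (-b * (y ⬝ᵥ S.mulVec y)) with hI
  have hIpos : 0 < I := integral_exp_pos hint
  set C : ℝ := ∑ j, (xt - x j) ⬝ᵥ (P j).mulVec (xt - x j) with hC
  have key : (fun v => Real.log (H (Function.update x c v))) = fun v =>
      -b * (C - 2 * ((P c).mulVec (xt - x c) ⬝ᵥ (v - x c)) + (v - x c) ⬝ᵥ (P c).mulVec (v - x c)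
          - (S⁻¹.mulVec ((P c).mulVec (v - x c))) ⬝ᵥ (P c).mulVec (v - x c)) + Real.log I := by
    funext v
    obtain ⟨u, rfl⟩ : ∃ u, v = x c + u := ⟨v - x c, by simp⟩
    rw [add_sub_cancel_left]
    have hH : H (Function.update x c (x c + u)) =
        Real.exp (-b * (C - 2 * ((P c).mulVec (xt - x c) ⬝ᵥ u) + u ⬝ᵥ (P c).mulVec u
          - (S⁻¹.mulVec ((P c).mulVec u)) ⬝ᵥ (P c).mulVec u)) * I := by
      rw [hI, ← integral_sub_right_eq_self _ (xt + S⁻¹.mulVec ((P c).mulVec u)),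
        ← integral_const_mul]
      refine integral_congr_ae (Filter.Eventually.of_forall fun y => ?_)
      simp only [← Real.exp_sum, ← Real.exp_add]
      congr 1
      have := expo_eq P hP S hS hdet x xt hxt c u y
      rw [← Finset.sum_div, Finset.sum_neg_distrib]
      change -(∑ j, (y - Function.update x c (x c + u) j) ⬝ᵥ
        (P j).mulVec (y - Function.update x c (x c + u) j)) / (2 * τ) = _
      rw [this, hb]
      ring
    rw [hH, Real.log_mul (Real.exp_ne_zero _) hIpos.ne', Real.log_exp]
  rw [key]
  have hdiff : DifferentiableAt ℝ (fun v : Fin d → ℝ =>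
      -b * (C - 2 * ((P c).mulVec (xt - x c) ⬝ᵥ (v - x c)) + (v - x c) ⬝ᵥ (P c).mulVec (v - x c)
          - (S⁻¹.mulVec ((P c).mulVec (v - x c))) ⬝ᵥ (P c).mulVec (v - x c)) + Real.log I)
      (x c) := by
    simp only [dotProduct, Matrix.mulVec, Pi.sub_apply]
    fun_prop
  refine ⟨hdiff, fun w => ?_⟩
  rw [← hdiff.lineDeriv_eq_fderiv, lineDeriv]
  simp only [add_sub_cancel_left, Matrix.mulVec_smul, dotProduct_smul, smul_dotProduct, smul_eq_mul]
  set g := (P c).mulVec (xt - x c) ⬝ᵥ w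
  set q := w ⬝ᵥ (P c).mulVec w
  set r := (S⁻¹.mulVec ((P c).mulVec w)) ⬝ᵥ (P c).mulVec w
  have hd1 : HasDerivAt (fun t : ℝ => t * (t * q)) (1 * (0 * q) + 0 * (1 * q)) 0 :=
    (hasDerivAt_id (0:ℝ)).mul ((hasDerivAt_id (0:ℝ)).mul_const q)
  have hd2 : HasDerivAt (fun t : ℝ => t * (t * r)) (1 * (0 * r) + 0 * (1 * r)) 0 :=
    (hasDerivAt_id (0:ℝ)).mul ((hasDerivAt_id (0:ℝ)).mul_const r)
  have hd3 : HasDerivAt (fun t : ℝ => C - 2 * (t * g)) (-(2 * (1 * g))) 0 :=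
    (((hasDerivAt_id (0:ℝ)).mul_const g).const_mul 2).const_sub C
  have hd4 := (((hd3.add hd1).sub hd2).const_mul (-b)).add_const (Real.log I)
  refine hd4.deriv.trans ?_
  rw [hb]
  field_simp
  ring
end
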